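/- Let Y = {y_1, ..., y_m} be a nonempty finite set of m ≥ 1 distinct integers each less than −1, let X = {x_1, ..., x_n} be a (possibly empty) finite set of n ≥ 0 distinct integers each greater than 1, and let D = {1} ∪ Y ∪ X. Then diam(D) = 4 if m = 1, diam(D) = 5 if m = 2, and diam(D) = 6 if m > 2. -/

import Mathlib

/-!
The lower bounds hold in every signed tree realizing `D`. Since `-1 ∉ D`, no leaf hangs on a
negative edge. A vertex `v` with signed degree at most `-2` has two negative edges, at most one of
which points towards a prescribed vertex `u`; following the other one and then one further edge
gives a vertex at distance `dist u v + 2` from `u` (`exists_dist_add_two`). Extending in this way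
at both ends of the path between two vertices `v`, `v'` with signed degree at most `-2` yields
diameter at least `dist v v' + 4` (`dist_add_four_le_diam`). One can take `v = v'` in general,
`v ≠ v'` if `m ≥ 2`, and `dist v v' ≥ 2` if `m ≥ 3`, because a tree has no triangle.

For the upper bounds, attaching pendant vertices to a tree increases the diameter by at most `2`.
Start with a base tree of diameter at most `d` all of whose edges are negative and whose
vertices have prescribed targets in `D`, covering `Y`. Attach to each vertex, by negative edges,
many new vertices, whose targets run through `{1} ∪ X`. Now every signed degree is at most its
target, and pendant vertices on positive edges raise each one to the target while creating only
vertices of signed degree `1`. The diameter is at most `d + 4` (`exists_realization`). The base is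
the complete graph on `Y` if `m ≤ 2`, with `d = m - 1`, and a star with leaf set `Y` otherwise,
with `d = 2`.
-/

/-- A signed tree: a finite tree (on vertex type `Fin n`) together with an
assignment of a sign to each possible edge (`true` = positive, `false` = negative). -/
structure SignedTree where
  n : ℕ
  G : SimpleGraph (Fin n)
  adjDec : DecidableRel G.Adj
  isTree : G.IsTree
  sgn : Sym2 (Fin n) → Bool

namespace SignedTree

/-- The (unsigned) degree of a vertex in the underlying tree. -/
def deg (T : SignedTree) (v : Fin T.n) : ℕ :=
  letI := T.adjDec
  T.G.degree v

/-- The signed degree of a vertex: the number of positive edges incident to it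
minus the number of negative edges incident to it. -/
def sdeg (T : SignedTree) (v : Fin T.n) : ℤ :=
  letI := T.adjDec
  ((((T.G.neighborFinset v).filter fun w => T.sgn s(v, w) = true).card : ℤ)) -
  ((((T.G.neighborFinset v).filter fun w => T.sgn s(v, w) = false).card : ℤ))

/-- The signed tree `T` realizes the set `D` if `D` is exactly the set of signed
degrees of the vertices of `T`. -/
def Realizes (T : SignedTree) (D : Set ℤ) : Prop :=
  D = Set.range T.sdeg

end SignedTree

/-- `diamOfSet D` is the minimum diameter of the underlying tree over all
signed trees realizing `D`. -/
noncomputable def diamOfSet (D : Set ℤ) : ℕ :=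
  sInf {k : ℕ | ∃ T : SignedTree, T.Realizes D ∧ T.G.diam = k}

/-- `orderOfSet D` is the minimum number of vertices of the underlying tree over
all signed trees realizing `D`. -/
noncomputable def orderOfSet (D : Set ℤ) : ℕ :=
  sInf {k : ℕ | ∃ T : SignedTree, T.Realizes D ∧ T.n = k}

namespace SignedTreeAux

open SimpleGraph

/-! ### Lower bounds -/

/-- At most one neighbour of `v` is closer to `u` than `v` is, and the distances from `u` of
adjacent vertices differ by exactly one. For two closer neighbours, the geodesics from `u` to them
would extend to geodesics from `u` to `v`; these coincide in a tree, and so do their next-to-last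
vertices. -/
lemma dist_of_two_adj {V : Type} {G : SimpleGraph V} (hG : G.IsTree) (u : V) {v w w' : V}
    (h : G.Adj v w) (h' : G.Adj v w') (hne : w ≠ w') :
    G.dist u w = G.dist u v + 1 ∨ G.dist u w' = G.dist u v + 1 := by
  by_contra! hc
  have h1 := (hG.dist_eq_dist_add_one_of_adj u h).resolve_right hc.1
  have h2 := (hG.dist_eq_dist_add_one_of_adj u h').resolve_right hc.2
  obtain ⟨p, -, hpl⟩ := hG.connected.exists_path_of_dist u w
  obtain ⟨q, -, hql⟩ := hG.connected.exists_path_of_dist u w'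
  have hp' : (p.concat h.symm).IsPath :=
    Walk.isPath_of_length_eq_dist _ (by rw [Walk.length_concat]; omega)
  have hq' : (q.concat h'.symm).IsPath :=
    Walk.isPath_of_length_eq_dist _ (by rw [Walk.length_concat]; omega)
  have he := (hG.existsUnique_path u v).unique hp' hq'
  have := congrArg Walk.penultimate he
  simp at this
  exact hne this

lemma exists_two_neg (T : SignedTree) (v : Fin T.n) (hv : T.sdeg v < -1) :
    ∃ w w', w ≠ w' ∧ T.G.Adj v w ∧ T.G.Adj v w' ∧ T.sgn s(v, w) = false ∧
      T.sgn s(v, w') = false := by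
  let _ := T.adjDec
  unfold SignedTree.sdeg at hv
  have : 1 < ((T.G.neighborFinset v).filter fun w => T.sgn s(v, w) = false).card := by omega
  obtain ⟨w, hw, w', hw', hne⟩ := Finset.one_lt_card.1 this
  simp only [Finset.mem_filter, mem_neighborFinset] at hw hw'
  exact ⟨w, w', hne, hw.1, hw'.1, hw.2, hw'.2⟩

/-- An end of a negative edge has a further neighbour, unless it is a leaf of signed
degree `-1`. -/
lemma exists_other_nbr (T : SignedTree) (hT : ∀ v, T.sdeg v ≠ -1) {v w : Fin T.n}
    (h : T.G.Adj v w) (hs : T.sgn s(v, w) = false) : ∃ l, T.G.Adj w l ∧ l ≠ v := by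
  by_contra! hc
  let _ := T.adjDec
  have hN : T.G.neighborFinset w = {v} := by
    ext l
    simp only [mem_neighborFinset, Finset.mem_singleton]
    exact ⟨hc l, fun e => e ▸ h.symm⟩
  apply hT w
  have hs' : T.sgn s(w, v) = false := by rw [Sym2.eq_swap]; exact hs
  unfold SignedTree.sdeg
  simp [hN, Finset.filter_singleton, hs']

lemma exists_dist_add_two (T : SignedTree) (hT : ∀ v, T.sdeg v ≠ -1) (u v : Fin T.n)
    (hv : T.sdeg v < -1) : ∃ l, T.G.dist u l = T.G.dist u v + 2 := by
  obtain ⟨w, w', hne, h, h', hs, hs'⟩ := exists_two_neg T v hv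
  have key : ∀ w, T.G.Adj v w → T.sgn s(v, w) = false → T.G.dist u w = T.G.dist u v + 1 →
      ∃ l, T.G.dist u l = T.G.dist u v + 2 := by
    intro w h hs hd
    obtain ⟨l, hl, hlv⟩ := exists_other_nbr T hT h hs
    refine ⟨l, ?_⟩
    rcases dist_of_two_adj T.isTree u hl h.symm hlv with h1 | h1 <;> omega
  rcases dist_of_two_adj T.isTree u h h' hne with hd | hd
  · exact key w h hs hd
  · exact key w' h' hs' hd

lemma dist_add_four_le_diam (T : SignedTree) (hT : ∀ v, T.sdeg v ≠ -1) (v v' : Fin T.n)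
    (hv : T.sdeg v < -1) (hv' : T.sdeg v' < -1) : T.G.dist v v' + 4 ≤ T.G.diam := by
  obtain ⟨l, hl⟩ := exists_dist_add_two T hT v v' hv'
  obtain ⟨l', hl'⟩ := exists_dist_add_two T hT l v hv
  have : Nonempty (Fin T.n) := ⟨v⟩
  have := dist_le_diam (connected_iff_ediam_ne_top.1 T.isTree.connected) (u := l) (v := l')
  rw [T.G.dist_comm (u := l) (v := v)] at hl'
  omega

/-! ### Attaching pendant vertices -/

/-- The integer `1` or `-1` represented by a sign. -/
def sg (b : Bool) : ℤ := if b then 1 else -1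

open Classical in
/-- The signed degree, for a sign function on ordered pairs of vertices of any finite type. -/
noncomputable def sd {V : Type} [Fintype V] (G : SimpleGraph V) (s : V → V → Bool) (v : V) : ℤ :=
  ∑ u, if G.Adj v u then sg (s v u) else 0

/-- The graph obtained from `G` by attaching a pendant vertex to `v` for each element of `ι v`. -/
def pend {V : Type} (G : SimpleGraph V) (ι : V → Type) : SimpleGraph (V ⊕ Σ v, ι v) where
  Adj
    | .inl a, .inl b => G.Adj a b
    | .inl a, .inr b => b.1 = a
    | .inr a, .inl b => a.1 = b
    | .inr _, .inr _ => False
  symm := ⟨by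
    rintro (a | a) (b | b) h
    · exact G.adj_symm h
    · exact h
    · exact h
    · exact h⟩
  loopless := ⟨by
    rintro (a | a) h
    · exact G.loopless.irrefl a h
    · exact h⟩

/-- The signs on `pend G ι` extending `s`, with sign `ε` on all new edges. -/
def pendSgn {V : Type} (ι : V → Type) (s : V → V → Bool) (ε : Bool) :
    (V ⊕ Σ v, ι v) → (V ⊕ Σ v, ι v) → Bool
  | .inl a, .inl b => s a b
  | _, _ => ε

section pend

variable {V : Type} {G : SimpleGraph V} {ι : V → Type}

@[simp] lemma pend_ll (a b : V) : (pend G ι).Adj (.inl a) (.inl b) ↔ G.Adj a b := Iff.rfl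
@[simp] lemma pend_lr (a : V) (b) : (pend G ι).Adj (.inl a) (.inr b) ↔ b.1 = a := Iff.rfl
@[simp] lemma pend_rl (a : V) (b) : (pend G ι).Adj (.inr b) (.inl a) ↔ b.1 = a := Iff.rfl
@[simp] lemma pend_rr (a b) : ¬ (pend G ι).Adj (.inr a) (.inr b) := fun h => h

/-- The inclusion of the old graph. -/
def inlHom : G →g pend G ι := ⟨.inl, fun h => h⟩

/-- The old vertex to which a vertex of the extended graph is attached, or which it is. -/
def root : (V ⊕ Σ v, ι v) → V := Sum.elim id Sigma.fst

lemma pend_reach_root (x : V ⊕ Σ v, ι v) :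
    ∃ p : (pend G ι).Walk x (.inl (root x)), p.length ≤ 1 := by
  rcases x with a | a
  · exact ⟨.nil, Nat.zero_le _⟩
  · exact ⟨.cons (show (pend G ι).Adj (.inr a) (.inl a.1) from rfl) .nil, le_refl 1⟩

lemma pend_connected (hG : G.Connected) : (pend G ι).Connected := by
  have := hG.nonempty
  refine (connected_iff _).2 ⟨fun x y => ?_, inferInstance⟩
  obtain ⟨p, -⟩ := pend_reach_root (G := G) x
  obtain ⟨q, -⟩ := pend_reach_root (G := G) y
  exact (p.reachable.trans ((hG (root x) (root y)).map inlHom)).trans q.reachable.symm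

lemma pend_exists_walk_inl (hG : G.Connected) (a b : V) :
    ∃ r : (pend G ι).Walk (.inl a) (.inl b), r.length = G.dist a b := by
  obtain ⟨r, hr⟩ := hG.exists_walk_length_eq_dist a b
  exact ⟨r.map inlHom, (Walk.length_map _ _).trans hr⟩

lemma pend_dist (hG : G.Connected) {d : ℕ} (hd : ∀ u v, G.dist u v ≤ d) (x y) :
    (pend G ι).dist x y ≤ d + 2 := by
  obtain ⟨p, hp⟩ := pend_reach_root (G := G) x
  obtain ⟨q, hq⟩ := pend_reach_root (G := G) y
  obtain ⟨r, hr⟩ := pend_exists_walk_inl (ι := ι) hG (root x) (root y)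
  have h1 := hd (root x) (root y)
  refine (dist_le (p.append (r.append q.reverse))).trans ?_
  simp only [Walk.length_append, Walk.length_reverse]
  omega

lemma pend_sd_inl [Fintype V] [∀ v, Fintype (ι v)] (s : V → V → Bool) (ε : Bool) (v : V) :
    sd (pend G ι) (pendSgn ι s ε) (.inl v) = sd G s v + Fintype.card (ι v) * sg ε := by
  classical
  unfold sd
  rw [Fintype.sum_sum_type]
  congr 1
  rw [Fintype.sum_sigma]
  simp [pendSgn]

lemma pend_sd_inr [Fintype V] [∀ v, Fintype (ι v)] (s : V → V → Bool) (ε : Bool) (a) :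
    sd (pend G ι) (pendSgn ι s ε) (.inr a) = sg ε := by
  classical
  unfold sd
  rw [Fintype.sum_sum_type]
  simp [pendSgn]

/-- With all signs positive, `sd` is the degree, so the handshaking lemma reads as follows. -/
lemma sum_sd_true [Fintype V] (G : SimpleGraph V) :
    ∑ v, sd G (fun _ _ => true) v = 2 * (Nat.card G.edgeSet : ℤ) := by
  classical
  have h := G.sum_degrees_eq_twice_card_edges
  rw [Nat.card_eq_fintype_card, ← edgeFinset_card]
  have h2 : ∀ v, sd G (fun _ _ => true) v = G.degree v := by
    intro v
    rw [← card_neighborFinset_eq_degree, neighborFinset_eq_filter, Finset.card_filter]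
    simp [sd, sg]
  simp_rw [h2]
  exact_mod_cast h

/-- By the handshaking lemma each pendant vertex adds one edge. -/
lemma pend_isTree [Fintype V] [∀ v, Fintype (ι v)] (hG : G.IsTree) : (pend G ι).IsTree := by
  classical
  have hc := isTree_iff_connected_and_card.1 hG
  refine isTree_iff_connected_and_card.2 ⟨pend_connected hc.1, ?_⟩
  have h1 := sum_sd_true G
  have h2 := sum_sd_true (pend G ι)
  have hs : (fun _ _ => true) = pendSgn ι (fun _ _ => true) true := by
    funext a b
    rcases a with a | a <;> rcases b with b | b <;> rfl
  rw [hs, Fintype.sum_sum_type] at h2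
  simp only [pend_sd_inl, pend_sd_inr, Finset.sum_add_distrib, h1] at h2
  have h3 : Nat.card (V ⊕ Σ v, ι v) = Nat.card V + ∑ v, Fintype.card (ι v) := by
    simp [Fintype.card_sum, Fintype.card_sigma]
  have hc2 := hc.2
  simp only [sg, if_true, mul_one, Finset.sum_const, Finset.card_univ, Fintype.card_sigma,
    nsmul_eq_mul] at h2
  push_cast at h2
  zify at h3 hc2 ⊢
  linarith

end pend

/-! ### Upper bounds -/

/-- Transport of a signed tree on an arbitrary finite type to `Fin n`. -/
lemma exists_signedTree {V : Type} [Fintype V] (G : SimpleGraph V) (hG : G.IsTree)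
    (s : V → V → Bool) (hs : ∀ a b, s a b = s b a) {d : ℕ} (hd : ∀ u v, G.dist u v ≤ d) :
    ∃ T : SignedTree, T.Realizes (Set.range (sd G s)) ∧ T.G.diam ≤ d := by
  classical
  let e := Fintype.equivFin V
  let f : G.comap e.symm ≃g G := Iso.comap e.symm G
  refine ⟨⟨Fintype.card V, G.comap e.symm, inferInstance, f.isTree_iff.2 hG,
    Sym2.lift ⟨fun a b => s (e.symm a) (e.symm b), fun a b => hs _ _⟩⟩, ?_, ?_⟩
  · unfold SignedTree.Realizes
    rw [← e.symm.surjective.range_comp (sd G s)]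
    congr 1
    funext v
    simp only [SignedTree.sdeg, Function.comp, sd, neighborFinset_eq_filter, comap_adj,
      Sym2.lift_mk, Finset.filter_filter, Finset.card_filter]
    rw [← e.symm.sum_comp]
    push_cast
    rw [← Finset.sum_sub_distrib]
    refine Finset.sum_congr rfl fun u _ => ?_
    by_cases h : G.Adj (e.symm v) (e.symm u) <;>
      cases s (e.symm v) (e.symm u) <;> simp [h, sg]
  · have : Nonempty (Fin (Fintype.card V)) := e.nonempty_congr.1 hG.connected.nonempty
    obtain ⟨u, v, huv⟩ := (G.comap e.symm).exists_dist_eq_diam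
    change (G.comap e.symm).diam ≤ d
    rw [← huv]
    obtain ⟨p, hp⟩ := hG.connected.exists_walk_length_eq_dist (f u) (f v)
    have h1 := dist_le (p.map f.symm.toHom)
    rw [Walk.length_map, hp] at h1
    have h2 := h1.trans (hd (f u) (f v))
    have h3 : ∀ x, f.symm.toHom (f x) = x := f.symm_apply_apply
    rwa [h3, h3] at h2

/-- A base tree of diameter at most `d` with targets `t` extends to a signed tree realizing
`range t ∪ K` of diameter at most `d + 4`. -/
lemma exists_realization {V : Type} [Fintype V] (G : SimpleGraph V) (hG : G.IsTree) {d : ℕ}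
    (hd : ∀ u v, G.dist u v ≤ d) (t : V → ℤ) (K : Finset ℤ) (h1 : 1 ∈ K)
    (hK : ∀ k ∈ K, -1 ≤ k) (L : ℕ) (hL : 0 < L) (ht : ∀ v, -(L : ℤ) ≤ t v) :
    ∃ T : SignedTree, T.Realizes (Set.range t ∪ ↑K) ∧ T.G.diam ≤ d + 4 := by
  classical
  -- first layer: negative edges, the targets of the new vertices run through `K`
  let ι₁ : V → Type := fun _ => K × Fin L
  let s₀ : V → V → Bool := fun _ _ => false
  let s₁ := pendSgn ι₁ s₀ false
  let t₁ : (V ⊕ Σ v, ι₁ v) → ℤ := Sum.elim t (fun x => (x.2.1 : ℤ))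
  have hle : ∀ w, sd (pend G ι₁) s₁ w ≤ t₁ w := by
    rintro (v | ⟨v, k, i⟩)
    · have ha : sd G s₀ v ≤ 0 := Finset.sum_nonpos fun u _ => by
        split_ifs <;> simp [sg, s₀]
      have hb : (L : ℤ) ≤ (Fintype.card (ι₁ v) : ℤ) := by
        simp only [ι₁, Fintype.card_prod, Fintype.card_coe, Fintype.card_fin]
        exact_mod_cast Nat.le_mul_of_pos_left _ (Finset.card_pos.2 ⟨1, h1⟩)
      have := ht v
      rw [pend_sd_inl]
      simp only [sg, t₁, Sum.elim_inl, Bool.false_eq_true, if_false]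
      linarith
    · rw [pend_sd_inr]
      simpa [sg, t₁] using hK k.1 k.2
  -- second layer: positive edges, raising each signed degree to its target
  let ι₂ : (V ⊕ Σ v, ι₁ v) → Type := fun w => Fin (t₁ w - sd (pend G ι₁) s₁ w).toNat
  have ht₁ := pend_isTree (ι := ι₁) hG
  obtain ⟨T, hT, hTd⟩ := exists_signedTree (pend (pend G ι₁) ι₂) (pend_isTree ht₁)
    (pendSgn ι₂ s₁ true) (by
      rintro ((a | a) | a) ((b | b) | b) <;> rfl)
    (pend_dist ht₁.connected (pend_dist hG.connected hd))
  refine ⟨T, ?_, hTd⟩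
  have hl : ∀ w, sd (pend (pend G ι₁) ι₂) (pendSgn ι₂ s₁ true) (.inl w) = t₁ w := by
    intro w
    have := hle w
    rw [pend_sd_inl]
    simp only [ι₂, Fintype.card_fin, sg, if_true, mul_one]
    omega
  convert hT using 1
  ext z
  constructor
  · rintro (⟨v, rfl⟩ | hz)
    · exact ⟨.inl (.inl v), hl _⟩
    · obtain ⟨v⟩ := hG.connected.nonempty
      exact ⟨.inl (.inr ⟨v, ⟨z, hz⟩, ⟨0, hL⟩⟩), hl _⟩
  · rintro ⟨(((v | ⟨v, k, i⟩)) | a), rfl⟩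
    · exact Or.inl ⟨v, (hl (.inl v)).symm⟩
    · rw [hl]
      exact Or.inr k.2
    · rw [pend_sd_inr]
      exact Or.inr h1

lemma top_isTree {V : Type} [Fintype V] [Nonempty V] (h : Fintype.card V ≤ 2) :
    (⊤ : SimpleGraph V).IsTree :=
  ⟨connected_top, IsAcyclic.of_card_le_two (by
    rw [ENat.card_eq_coe_fintype_card]; exact_mod_cast h)⟩

lemma diamOfSet_eq {D : Set ℤ} {k : ℕ} (hle : ∃ T : SignedTree, T.Realizes D ∧ T.G.diam ≤ k)
    (hge : ∀ T : SignedTree, T.Realizes D → k ≤ T.G.diam) : diamOfSet D = k := by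
  obtain ⟨T, hT, hk⟩ := hle
  apply le_antisymm
  · have h : diamOfSet D ≤ T.G.diam := Nat.sInf_le ⟨T, hT, rfl⟩
    exact h.trans hk
  · obtain ⟨T', hT', h⟩ := Nat.sInf_mem
      (s := {k : ℕ | ∃ T : SignedTree, T.Realizes D ∧ T.G.diam = k}) ⟨_, T, hT, rfl⟩
    exact (hge T' hT').trans_eq h

end SignedTreeAux

open SignedTreeAux in
/-- For `D = {1} ∪ Y ∪ X` with `Y` a nonempty set of `m` distinct integers
each less than `-1` and `X` a (possibly empty) set of `n` distinct integers each greater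
than 1: `diam(D) = 4` if `m = 1`, `5` if `m = 2`, and `6` if `m > 2`. -/
theorem stmt_8 (m n : ℕ) (Y : Finset ℤ) (hYcard : Y.card = m) (hYne : Y.Nonempty)
    (hy : ∀ y ∈ Y, y < -1) (X : Finset ℤ) (hXcard : X.card = n) (hx : ∀ x ∈ X, 1 < x)
    (D : Set ℤ) (hD : D = insert 1 ((↑Y : Set ℤ) ∪ (↑X : Set ℤ))) :
    (m = 1 → diamOfSet D = 4) ∧ (m = 2 → diamOfSet D = 5) ∧ (2 < m → diamOfSet D = 6) := by
  classical
  have hneg : ∀ T : SignedTree, T.Realizes D → ∀ v, T.sdeg v ≠ -1 := by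
    intro T hT v hv
    have : (-1 : ℤ) ∈ D := by rw [hT]; exact ⟨v, hv⟩
    rw [hD] at this
    rcases this with h | h | h
    · omega
    · exact absurd (hy _ h) (by omega)
    · exact absurd (hx _ h) (by omega)
  have hvert : ∀ T : SignedTree, T.Realizes D → ∀ y ∈ Y, ∃ v, T.sdeg v = y := by
    intro T hT y hyY
    have : y ∈ D := by rw [hD]; exact Or.inr (Or.inl hyY)
    rw [hT] at this
    exact this
  let L : ℕ := ∑ y ∈ Y, y.natAbs
  have hLy : ∀ y ∈ Y, y.natAbs ≤ L := fun y h =>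
    Finset.single_le_sum (f := fun y : ℤ => y.natAbs) (fun _ _ => Nat.zero_le _) h
  have hL : 0 < L := by
    obtain ⟨y, h⟩ := hYne
    have := hLy y h
    have := hy y h
    omega
  have h1K : 1 ∈ insert 1 X := Finset.mem_insert_self _ _
  have hK : ∀ k ∈ insert 1 X, (-1 : ℤ) ≤ k := by
    intro k hk
    rcases Finset.mem_insert.1 hk with rfl | hk
    · norm_num
    · have := hx k hk
      omega
  have : Nonempty Y := hYne.to_subtype
  -- the complete graph on `Y` as base tree
  have hcomplete : m ≤ 2 → ∀ d, (∀ u v, (⊤ : SimpleGraph Y).dist u v ≤ d) →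
      ∃ T : SignedTree, T.Realizes D ∧ T.G.diam ≤ d + 4 := by
    intro hm d hd
    obtain ⟨T, hT, hTd⟩ := exists_realization (⊤ : SimpleGraph Y)
      (top_isTree (by rw [Fintype.card_coe]; omega)) hd (fun y => (y : ℤ)) _ h1K hK L hL
      (fun y => by have := hLy y y.2; omega)
    refine ⟨T, ?_, hTd⟩
    convert hT using 1
    rw [hD]
    ext z
    simp [or_comm]
  refine ⟨fun hm => ?_, fun hm => ?_, fun hm => ?_⟩
  · apply diamOfSet_eq
    · refine hcomplete (by omega) 0 fun u v => ?_
      have : Subsingleton Y := by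
        rw [← Fintype.card_le_one_iff_subsingleton, Fintype.card_coe]
        omega
      rw [Subsingleton.elim u v]
      simp
    · intro T hT
      obtain ⟨y, h⟩ := hYne
      obtain ⟨v, hv⟩ := hvert T hT y h
      have hv' : T.sdeg v < -1 := hv ▸ hy y h
      have := dist_add_four_le_diam T (hneg T hT) v v hv' hv'
      omega
  · apply diamOfSet_eq
    · refine hcomplete (by omega) 1 fun u v => ?_
      rw [SimpleGraph.dist_top]
      split_ifs <;> simp
    · intro T hT
      obtain ⟨y, h, y', h', hne⟩ := Finset.one_lt_card.1 (show 1 < Y.card by omega)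
      obtain ⟨v, hv⟩ := hvert T hT y h
      obtain ⟨v', hv'⟩ := hvert T hT y' h'
      have := dist_add_four_le_diam T (hneg T hT) v v' (hv ▸ hy y h) (hv' ▸ hy y' h')
      have h0 := T.isTree.connected.pos_dist_of_ne
        (show v ≠ v' from fun e => hne (by rw [← hv, ← hv', e]))
      omega
  · apply diamOfSet_eq
    · -- the star with leaf set `Y` and centre of target `1` as base tree
      have hbot : (⊥ : SimpleGraph Unit).IsTree := SimpleGraph.IsTree.of_subsingleton
      obtain ⟨T, hT, hTd⟩ := exists_realization (pend (⊥ : SimpleGraph Unit) fun _ => Y)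
        (pend_isTree hbot) (pend_dist hbot.connected (d := 0) (by simp))
        (Sum.elim (fun _ => 1) fun y => (y.2 : ℤ)) _ h1K hK L hL (by
          rintro (_ | ⟨_, y⟩)
          · simp only [Sum.elim_inl]
            omega
          · have := hLy y y.2
            simp only [Sum.elim_inr]
            omega)
      refine ⟨T, ?_, hTd⟩
      convert hT using 1
      rw [hD]
      ext z
      simp
      tauto
    · intro T hT
      obtain ⟨a, ha, b, hb, c, hc, hab, hac, hbc⟩ :=
        Finset.two_lt_card.1 (show 2 < Y.card by omega)
      obtain ⟨u, hu⟩ := hvert T hT a ha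
      obtain ⟨v, hv⟩ := hvert T hT b hb
      obtain ⟨w, hw⟩ := hvert T hT c hc
      have huv : u ≠ v := fun e => hab (by rw [← hu, ← hv, e])
      have huw : u ≠ w := fun e => hac (by rw [← hu, ← hw, e])
      have hvw : v ≠ w := fun e => hbc (by rw [← hv, ← hw, e])
      have d1 := dist_add_four_le_diam T (hneg T hT) u v (hu ▸ hy a ha) (hv ▸ hy b hb)
      have d2 := dist_add_four_le_diam T (hneg T hT) u w (hu ▸ hy a ha) (hw ▸ hy c hc)
      have d3 := dist_add_four_le_diam T (hneg T hT) v w (hv ▸ hy b hb) (hw ▸ hy c hc)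
      have p1 := T.isTree.connected.pos_dist_of_ne huv
      have p2 := T.isTree.connected.pos_dist_of_ne huw
      have p3 := T.isTree.connected.pos_dist_of_ne hvw
      by_contra hlt
      -- otherwise `v` and `w` are adjacent and equally far from `u`, impossible in a tree
      have hadj : T.G.Adj v w := SimpleGraph.dist_eq_one_iff_adj.1 (by omega)
      exact T.isTree.dist_ne_of_adj u hadj (by omega)
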